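/- arXiv:2007.12752 — 2 statements merged into one kernel-verified Lean document; each statement's English description precedes it below -/
import Mathlib

section
/- Let α > 2 and let Q_α be the set of real numbers x ∈ [0,1] for which the inequality ‖qx‖ ≤ q^{1−α} is satisfied by infinitely many positive integers q, where ‖y‖ := min_{z ∈ ℤ} |y − z|. Then dim_H Q_α = 2/α; moreover, Q_α is dense in [0,1] and dim_H(Q_α ∩ J) = 2/α for every nondegenerate subinterval J ⊆ [0,1]. -/
/-!
The upper bound is the natural covering. A point of `jarnikSet α` lies within `q ^ (-α)` of a
fraction `p / q`, `0 ≤ p ≤ q`, for infinitely many `q`, and for `d > 2 / α` the series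
`∑ (q + 1) (2 q ^ (-α)) ^ d` of the `d`-th powers of the diameters converges
(`dimH_jarnikSet_le`).

The lower bound is local: for every `s < 2 / α` and every interval `[a, b] ⊆ [0, 1]`, a Cantor set
of dimension at least `s` is built inside `jarnikSet α ∩ [a, b]`.

* By Dirichlet's theorem every `x` is within `1 / (q Q)` of some `p / q` with `q ≤ Q`. The
  neighbourhoods with `q ≤ Q / 8` cover at most half of an interval of length `L`, once `Q` is
  large, so about `L Q ^ 2` neighbourhoods with `Q / 8 < q ≤ Q` are needed to cover the rest
  (`exists_many_fractions`). Distinct fractions of denominator at most `Q` are `1 / Q ^ 2` apart.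
* Hence each interval of radius `r` contains `m ≈ r Q ^ 2` intervals of radius `r' = Q ^ (-α)`
  centred at such fractions, and every point of these is approximated to order `α` by a fraction
  of denominator `q > Q / 8`. Since `α s < 2`, a large `Q` gives `r' ^ s * m ≥ 1`
  (`exists_children`). The number `m` depends on `r` alone, not on the position of the interval,
  so the construction can be iterated with the same number of children everywhere on a level.
* The dimension of the resulting Cantor set is bounded from below without constructing a measure:
  numbering the intervals of each level from left to right identifies the points of `[0, 1)`,
  expanded in the mixed base `(m k)`, with points of the Cantor set, and the inverse of this
  parametrisation is `s`-Hölder. As it maps onto `[0, 1)`, the Cantor set has dimension at least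
  `s` (`le_dimH_of_cantor`).
-/

open Set Filter Topology MeasureTheory

/-- The distance from `y` to the nearest integer, `‖y‖ = min_{z ∈ ℤ} |y - z|`. -/
noncomputable def distNearestInt (y : ℝ) : ℝ := |y - round y|

/-- `jarnikSet α` is the set of `x ∈ [0,1]` such that `‖qx‖ ≤ q^{1-α}` for infinitely many
positive integers `q`. -/
noncomputable def jarnikSet (α : ℝ) : Set ℝ :=
  {x ∈ Icc (0 : ℝ) 1 |
    {q : ℕ | 0 < q ∧ distNearestInt (q * x) ≤ (q : ℝ) ^ (1 - α)}.Infinite}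

/-! ### Upper bound -/

/-- The natural covers of `jarnikSet α` by the intervals of radius `q ^ (-α)` around `p / q` have
bounded `d`-size for every `d > 2 / α`. -/
lemma dimH_jarnikSet_le {α : ℝ} (hα : 2 < α) : dimH (jarnikSet α) ≤ ENNReal.ofReal (2 / α) := by
  have hα0 : 0 < α := by linarith
  refine le_of_forall_gt fun c hc => ?_
  obtain ⟨d, hd1, hd2⟩ := ENNReal.lt_iff_exists_nnreal_btwn.1 hc
  refine lt_of_le_of_lt (dimH_le_of_hausdorffMeasure_ne_top ?_) hd2
  have hd : 2 / α < d := by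
    have := (ENNReal.ofReal_lt_iff_lt_toReal (by positivity) ENNReal.coe_ne_top).1 hd1
    simpa using this
  have hd0 : (0 : ℝ) < d := lt_trans (by positivity) hd
  have hαd : 2 < α * d := by rw [div_lt_iff₀ hα0] at hd; linarith
  -- The `n`-th cover uses the denominators `q > n` only; the index type is kept the same for all
  -- `n` by putting the empty set at the other indices.
  set t : ∀ _ : ℕ, (Σ q : ℕ, Fin (q + 1)) → Set ℝ := fun n i =>
    if n < i.1 then Metric.closedBall ((i.2 : ℕ) / (i.1 : ℝ)) ((i.1 : ℝ) ^ (-α)) else ∅ with ht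
  have hball : ∀ (x ρ : ℝ), Metric.ediam (Metric.closedBall x ρ) = ENNReal.ofReal (2 * ρ) := by
    intro x ρ
    rw [Real.closedBall_eq_Icc, Real.ediam_Icc]; congr 1; ring
  have hμ := Measure.hausdorffMeasure_le_liminf_tsum (d : ℝ) (jarnikSet α) (l := atTop)
    (fun n : ℕ => ENNReal.ofReal (2 * (n : ℝ) ^ (-α))) ?_ t ?_ ?_
  rotate_left
  · have h1 : Tendsto (fun n : ℕ => 2 * (n : ℝ) ^ (-α)) atTop (𝓝 (2 * 0)) :=
      ((tendsto_rpow_neg_atTop hα0).comp tendsto_natCast_atTop_atTop).const_mul 2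
    simpa using ENNReal.tendsto_ofReal h1
  · filter_upwards [eventually_gt_atTop 0] with n hn i
    simp only [ht]
    split_ifs with h
    · rw [hball]
      apply ENNReal.ofReal_le_ofReal
      gcongr 2 * ?_
      exact Real.rpow_le_rpow_of_nonpos (by exact_mod_cast hn) (by exact_mod_cast h.le)
        (by linarith)
    · simp
  · refine Eventually.of_forall fun n x hx => ?_
    obtain ⟨⟨hx0, hx1⟩, hinf⟩ := hx
    obtain ⟨q, ⟨hq0, hq⟩, hnq⟩ := hinf.exists_gt n
    have hq0' : (0 : ℝ) < q := by exact_mod_cast hq0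
    have hp0 : 0 ≤ round ((q : ℝ) * x) := by
      rw [round_eq]
      exact Int.floor_nonneg.2 (by positivity)
    have hp1 : round ((q : ℝ) * x) < q + 1 := by
      rw [round_eq, Int.floor_lt]
      push_cast
      nlinarith
    obtain ⟨p, hp⟩ := Int.eq_ofNat_of_zero_le hp0
    refine mem_iUnion.2 ⟨⟨q, ⟨p, by omega⟩⟩, ?_⟩
    simp only [ht, if_pos hnq, Metric.mem_closedBall, Real.dist_eq]
    unfold distNearestInt at hq
    rw [hp] at hq
    have e : x - (p : ℝ) / q = (q * x - p) / q := by field_simp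
    rw [e, abs_div, abs_of_pos hq0', div_le_iff₀ hq0']
    refine le_trans (by simpa using hq) (le_of_eq ?_)
    rw [← Real.rpow_add_one hq0'.ne']; congr 1; ring
  refine ne_top_of_le_ne_top ?_ hμ
  -- Each cover has `d`-size at most the sum of the full series `u`. The term at `q = 0` is `0`, since
  -- `0 ^ (-α) = 0` for real powers.
  set u : ℕ → ℝ := fun q => ((q : ℝ) + 1) * (2 * (q : ℝ) ^ (-α)) ^ (d : ℝ) with hu
  have hsum : Summable u := by
    have h1 : Summable fun q : ℕ => (2 * 2 ^ (d : ℝ)) * (q : ℝ) ^ (1 - α * d) :=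
      (Real.summable_nat_rpow.2 (by linarith)).mul_left _
    refine Summable.of_nonneg_of_le (fun q => by positivity) (fun q => ?_) h1
    rcases Nat.eq_zero_or_pos q with rfl | hq
    · simp only [hu, Nat.cast_zero]
      rw [Real.zero_rpow (by linarith), mul_zero, Real.zero_rpow hd0.ne', mul_zero]
      positivity
    · have hq' : (1 : ℝ) ≤ q := by exact_mod_cast hq
      have hq0 : (0 : ℝ) < q := by linarith
      simp only [hu]
      rw [Real.mul_rpow (by norm_num) (by positivity), ← Real.rpow_mul hq0.le, sub_eq_add_neg,
        Real.rpow_add hq0, Real.rpow_one, neg_mul]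
      have : (q : ℝ) + 1 ≤ 2 * q := by linarith
      calc ((q : ℝ) + 1) * (2 ^ (d : ℝ) * (q : ℝ) ^ (-(α * d)))
          ≤ (2 * q) * (2 ^ (d : ℝ) * (q : ℝ) ^ (-(α * d))) := by gcongr
        _ = _ := by ring
  have hfin : ∑' q, ENNReal.ofReal (u q) ≠ ⊤ := hsum.tsum_ofReal_ne_top
  refine ne_top_of_le_ne_top hfin ?_
  refine liminf_le_of_le (by isBoundedDefault) fun b hb => ?_
  obtain ⟨n, hn⟩ := hb.exists
  refine hn.trans ?_
  rw [ENNReal.tsum_sigma']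
  refine ENNReal.tsum_le_tsum fun q => ?_
  rw [tsum_fintype]
  calc ∑ p : Fin (q + 1), Metric.ediam (t n ⟨q, p⟩) ^ (d : ℝ)
      ≤ ∑ p : Fin (q + 1), ENNReal.ofReal ((2 * (q : ℝ) ^ (-α)) ^ (d : ℝ)) := by
        refine Finset.sum_le_sum fun p _ => ?_
        simp only [ht]
        split_ifs with h
        · rw [hball, ENNReal.ofReal_rpow_of_nonneg (by positivity) hd0.le]
        · simp [hd0]
    _ = ENNReal.ofReal (u q) := by
        rw [Finset.sum_const, nsmul_eq_mul, hu, ENNReal.ofReal_mul (by positivity)]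
        congr 1
        rw [Finset.card_univ, Fintype.card_fin, ← ENNReal.ofReal_natCast]
        push_cast; rfl

/-! ### Counting fractions by Dirichlet's theorem -/

/-- Cesàro averages of `1 / (i + 1)` tend to `0`. -/
lemma tendsto_harmonic_div :
    Tendsto (fun Q : ℕ => 6 / (Q : ℝ) * ∑ q ∈ Finset.Icc 1 Q, 1 / (q : ℝ)) atTop (𝓝 0) := by
  have h6 := (tendsto_one_div_add_atTop_nhds_zero_nat (𝕜 := ℝ)).cesaro.const_mul 6
  rw [mul_zero] at h6
  refine h6.congr fun Q => ?_
  have : ∑ q ∈ Finset.Icc 1 Q, 1 / (q : ℝ) = ∑ i ∈ Finset.range Q, 1 / ((i : ℝ) + 1) := by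
    rw [Finset.range_eq_Ico]
    have := Finset.sum_Ico_add' (fun q : ℕ => 1 / (q : ℝ)) 0 Q 1
    push_cast at this
    rw [this]
    rfl
  rw [this]; ring

/-- An interval of length `L` meets the `8 / Q`-neighbourhoods of at least `L Q ^ 2 / 32` distinct
fractions with denominator in `(Q / 8, Q]`; the threshold for `Q` does not depend on the position `a`
of the interval. -/
lemma exists_many_fractions {L : ℝ} (hL : 0 < L) : ∀ᶠ Q : ℕ in atTop, ∀ a : ℝ,
    ∃ G : Finset ℝ, L * (Q : ℝ) ^ 2 / 32 ≤ G.card ∧ ∀ y ∈ G, ∃ p : ℤ, ∃ q : ℕ,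
      Q < 8 * q ∧ q ≤ Q ∧ y = p / q ∧ a * q - 1 ≤ p ∧ p ≤ (a + L) * q + 1 := by
  have hev := tendsto_harmonic_div.eventually (gt_mem_nhds (show (0 : ℝ) < L / 4 by positivity))
  filter_upwards [hev, eventually_gt_atTop 0] with Q hH hQ a
  have hQ' : (0 : ℝ) < Q := by exact_mod_cast hQ
  -- The numerators `p` for which `p / q` is within `1 / q` of `[a, a + L]`.
  set P : ℕ → Finset ℤ := fun q => Finset.Icc ⌈a * q - 1⌉ ⌊(a + L) * q + 1⌋ with hP
  have hPmem : ∀ q p, p ∈ P q ↔ a * q - 1 ≤ p ∧ p ≤ (a + L) * q + 1 := by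
    intro q p
    simp only [hP, Finset.mem_Icc, Int.ceil_le, Int.le_floor]
  have hPcard : ∀ q : ℕ, ((P q).card : ℝ) ≤ L * q + 3 := by
    intro q
    have h0 : 0 ≤ L * q := by positivity
    rw [hP, Int.card_Icc]
    have h1 : ((⌊(a + L) * q + 1⌋ + 1 - ⌈a * q - 1⌉).toNat : ℝ)
        = max ((⌊(a + L) * q + 1⌋ : ℝ) + 1 - ⌈a * q - 1⌉) 0 := by
      rw [← Int.cast_natCast, Int.toNat_eq_max]; push_cast; rfl
    rw [h1]
    apply max_le _ (by linarith)
    have := Int.floor_le ((a + L) * q + 1)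
    have := Int.le_ceil (a * q - 1)
    linarith
  classical
  set G : Finset ℝ := (Finset.Ioc (Q / 8) Q).biUnion fun q => (P q).image fun p : ℤ => (p : ℝ) / q
    with hG
  refine ⟨G, ?_, ?_⟩
  swap
  · intro y hy
    simp only [hG, Finset.mem_biUnion, Finset.mem_Ioc, Finset.mem_image] at hy
    obtain ⟨q, ⟨hq1, hq2⟩, p, hp, rfl⟩ := hy
    obtain ⟨h1, h2⟩ := (hPmem q p).1 hp
    exact ⟨p, q, by omega, hq2, rfl, h1, h2⟩
  -- Dirichlet: small denominators `q ≤ Q / 8` contribute the first union, the others lie in `G`, and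
  -- for them `1 / (Q q) ≤ 8 / Q ^ 2`.
  have hcover : Icc a (a + L) ⊆ (⋃ q ∈ Finset.Icc 1 (Q / 8), ⋃ p ∈ P q,
      Metric.closedBall ((p : ℝ) / q) (1 / (Q * q))) ∪
      ⋃ y ∈ G, Metric.closedBall y (8 / (Q : ℝ) ^ 2) := by
    intro x hx
    obtain ⟨q, hq0, hqQ, hq⟩ := Real.exists_nat_abs_mul_sub_round_le x hQ
    set p := round ((q : ℝ) * x)
    have hq0' : (0 : ℝ) < q := by exact_mod_cast hq0
    have hle1 : 1 / ((Q : ℝ) + 1) ≤ 1 := by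
      rw [div_le_one (by positivity)]; linarith
    have hle2 : 1 / ((Q : ℝ) + 1) ≤ 1 / Q := by gcongr; linarith
    have habs := abs_le.1 hq
    have hp : p ∈ P q := by
      rw [hPmem]
      constructor
      · nlinarith [hx.1, hx.2]
      · nlinarith [hx.1, hx.2]
    have hdist : dist x ((p : ℝ) / q) ≤ 1 / (Q * q) := by
      rw [Real.dist_eq]
      have : x - (p : ℝ) / q = (q * x - p) / q := by field_simp
      rw [this, abs_div, abs_of_pos hq0', ← div_div]
      gcongr
      exact hq.trans hle2
    by_cases h8 : q ≤ Q / 8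
    · left
      simp only [mem_iUnion]
      exact ⟨q, Finset.mem_Icc.2 ⟨hq0, h8⟩, p, hp, hdist⟩
    · right
      simp only [mem_iUnion]
      refine ⟨(p : ℝ) / q, ?_, hdist.trans ?_⟩
      · simp only [hG, Finset.mem_biUnion, Finset.mem_Ioc, Finset.mem_image]
        exact ⟨q, ⟨by omega, hqQ⟩, p, hp, rfl⟩
      · have h8' : (Q : ℝ) ≤ 8 * q := by
          have : Q ≤ 8 * q := by omega
          exact_mod_cast this
        rw [div_le_div_iff₀ (by positivity) (by positivity)]
        nlinarith
  have hvol : L ≤ (∑ q ∈ Finset.Icc 1 (Q / 8), ∑ p ∈ P q, 2 * (1 / ((Q : ℝ) * q)))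
      + ∑ y ∈ G, 2 * (8 / (Q : ℝ) ^ 2) := by
    have h1 : volume.real (Icc a (a + L)) = L := by
      rw [Real.volume_real_Icc_of_le (by linarith)]; ring
    rw [← h1]
    refine (measureReal_mono hcover ?_).trans ((measureReal_union_le _ _).trans (add_le_add ?_ ?_))
    · refine ne_of_lt (measure_union_lt_top ?_ ?_)
      · refine measure_biUnion_lt_top (Finset.finite_toSet _) fun q _ => ?_
        exact measure_biUnion_lt_top (Finset.finite_toSet _) fun p _ => measure_closedBall_lt_top
      · exact measure_biUnion_lt_top (Finset.finite_toSet _) fun p _ => measure_closedBall_lt_top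
    · refine (measureReal_biUnion_finset_le _ _).trans (Finset.sum_le_sum fun q _ => ?_)
      refine (measureReal_biUnion_finset_le _ _).trans (Finset.sum_le_sum fun p _ => ?_)
      rw [Real.volume_real_closedBall (by positivity)]
    · refine (measureReal_biUnion_finset_le _ _).trans (Finset.sum_le_sum fun p _ => ?_)
      rw [Real.volume_real_closedBall (by positivity)]
  -- About `L q` numerators belong to each `q`, so the small denominators cover a length of at most
  -- `(Q / 8) * (2 L / Q)` plus a harmonic error term.
  have hbad : (∑ q ∈ Finset.Icc 1 (Q / 8), ∑ p ∈ P q, 2 * (1 / ((Q : ℝ) * q))) ≤ L / 2 := by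
    calc (∑ q ∈ Finset.Icc 1 (Q / 8), ∑ p ∈ P q, 2 * (1 / ((Q : ℝ) * q)))
        ≤ ∑ q ∈ Finset.Icc 1 (Q / 8), (2 * L / Q + 6 / Q * (1 / (q : ℝ))) := by
          refine Finset.sum_le_sum fun q hq => ?_
          have hq0 : (0 : ℝ) < q := by exact_mod_cast (Finset.mem_Icc.1 hq).1
          rw [Finset.sum_const, nsmul_eq_mul]
          calc ((P q).card : ℝ) * (2 * (1 / ((Q : ℝ) * q)))
              ≤ (L * q + 3) * (2 * (1 / ((Q : ℝ) * q))) := by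
                gcongr; exact hPcard q
            _ = _ := by field_simp; ring
      _ = ((Q / 8 : ℕ) : ℝ) * (2 * L / Q)
          + 6 / Q * ∑ q ∈ Finset.Icc 1 (Q / 8), (1 / (q : ℝ)) := by
          rw [Finset.sum_add_distrib, Finset.mul_sum]; simp
      _ ≤ ((Q : ℝ) / 8) * (2 * L / Q) + 6 / Q * ∑ q ∈ Finset.Icc 1 Q, (1 / (q : ℝ)) := by
          gcongr
          · exact_mod_cast Nat.cast_div_le
          · exact Nat.div_le_self _ _
      _ ≤ L / 4 + L / 4 := by
          gcongr
          apply le_of_eq; field_simp; norm_num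
      _ = L / 2 := by ring
  rw [Finset.sum_const, nsmul_eq_mul] at hvol
  have h3 : L / 2 ≤ (G.card : ℝ) * (2 * (8 / (Q : ℝ) ^ 2)) := by linarith
  have h4 : (G.card : ℝ) * (2 * (8 / (Q : ℝ) ^ 2)) = G.card * 16 / (Q : ℝ) ^ 2 := by ring
  rw [h4, le_div_iff₀ (by positivity)] at h3
  linarith

/-! ### Dimension of homogeneous Cantor sets -/

/-- Lower bound for the dimension of a homogeneous Cantor set. The compact sets `I k n`,
`n < ∏ i < k, m i`, are the pieces of level `k`; the children of `I k n` are the `I (k + 1) n'`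
with `n' / m k = n`. Siblings with indices `n < n'` are at distance at least `ε k * (n' - n)`, and
`hC` is the condition of the mass distribution principle: a piece of level `k` has mass
`1 / ∏ i < k, m i` and its children spread over a length of at least `m k * ε k`.
The hypotheses run over all indices, but the estimate only uses those below `∏ i < k, m i`. -/
lemma le_dimH_of_cantor {s C : ℝ} (hs0 : 0 < s) (hs1 : s ≤ 1) {E : Set ℝ} (m : ℕ → ℕ)
    (hm : ∀ k, 2 ≤ m k) (I : ℕ → ℕ → Set ℝ) (hcpt : ∀ k n, IsCompact (I k n))
    (hne : ∀ k n, (I k n).Nonempty) (hnest : ∀ k n, I (k + 1) n ⊆ I k (n / m k))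
    (ε : ℕ → ℝ) (hε : ∀ k, 0 < ε k)
    (hsep : ∀ k n n', n < n' → n / m k = n' / m k → ∀ x ∈ I (k + 1) n, ∀ y ∈ I (k + 1) n',
      ε k * ((n' : ℝ) - n) ≤ |x - y|)
    (hC0 : 0 ≤ C)
    (hC : ∀ k, 1 ≤ C * ((m k * ε k) ^ s * ((∏ i ∈ Finset.range k, m i : ℕ) : ℝ)))
    (hE : ∀ x, (∀ k, ∃ n, x ∈ I k n) → x ∈ E) : ENNReal.ofReal s ≤ dimH E := by
  set M : ℕ → ℕ := fun k => ∏ i ∈ Finset.range k, m i with hM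
  have hM0 : M 0 = 1 := by simp [hM]
  have hMs : ∀ k, M (k + 1) = M k * m k := fun k => Finset.prod_range_succ _ _
  have hMpos : ∀ k, 0 < M k := fun k => Finset.prod_pos fun i _ => by have := hm i; omega
  have hM2 : ∀ k, k < M k := by
    intro k
    induction k with
    | zero => simp [hM0]
    | succ k ih => rw [hMs]; nlinarith [hm k]
  -- `N t k` is the index of the interval of level `k` attached to `t ∈ [0, 1)`.
  set N : ℝ → ℕ → ℕ := fun t k => ⌊t * M k⌋₊ with hN
  have hNs : ∀ t k, N t (k + 1) / m k = N t k := by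
    intro t k
    have hmk : (m k : ℝ) ≠ 0 := by have := hm k; positivity
    simp only [hN, hMs]
    rw [← Nat.floor_div_natCast]
    push_cast
    congr 1
    field_simp
  have hpt : ∀ t, ∃ x, ∀ k, x ∈ I k (N t k) := by
    intro t
    have := IsCompact.nonempty_iInter_of_sequence_nonempty_isCompact_isClosed
      (fun k => I k (N t k)) (fun k => by
        have := hnest k (N t (k + 1))
        rwa [hNs] at this) (fun k => hne _ _) (hcpt _ _) (fun k => (hcpt _ _).isClosed)
    simpa [Set.Nonempty] using this
  choose g hg using hpt
  have hgE : g '' Ico 0 1 ⊆ E := by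
    rintro _ ⟨t, -, rfl⟩
    exact hE _ fun k => ⟨_, hg t k⟩
  -- The Hölder estimate for the inverse of `g`.
  have key : ∀ t t' : ℝ, 0 ≤ t → t < t' → t' < 1 → t' - t ≤ 2 * C * |g t - g t'| ^ s := by
    intro t t' ht0 htt' ht1
    have hex : ∃ k, N t k ≠ N t' k := by
      obtain ⟨k, hk⟩ := exists_nat_gt (1 / (t' - t))
      refine ⟨k, fun h => ?_⟩
      have hpos : 0 < t' - t := by linarith
      rw [div_lt_iff₀ hpos] at hk
      have h1 := Nat.floor_le (a := t * M k) (by positivity)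
      have h2 := Nat.lt_floor_add_one (t' * M k)
      have h3 : (⌊t * M k⌋₊ : ℝ) = ⌊t' * M k⌋₊ := by exact_mod_cast h
      have h4 : (k : ℝ) ≤ M k := by exact_mod_cast (hM2 k).le
      nlinarith
    classical
    -- `k + 1` is the first level at which `t` and `t'` are attached to different intervals.
    obtain ⟨k, hk⟩ : ∃ k, Nat.find hex = k + 1 := by
      refine Nat.exists_eq_succ_of_ne_zero fun h0 => ?_
      have := Nat.find_spec hex
      rw [h0] at this
      apply this
      simp only [hN, hM0]
      rw [Nat.floor_eq_zero.2, Nat.floor_eq_zero.2] <;> push_cast <;> linarith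
    have hne1 : N t (k + 1) ≠ N t' (k + 1) := hk ▸ Nat.find_spec hex
    have heq : N t k = N t' k := by
      by_contra h
      exact Nat.find_min hex (by omega) h
    have hlt : N t (k + 1) < N t' (k + 1) := by
      refine lt_of_le_of_ne (Nat.floor_mono ?_) hne1
      gcongr
    have hsame : N t (k + 1) / m k = N t' (k + 1) / m k := by rw [hNs, hNs, heq]
    have hs := hsep k _ _ hlt hsame _ (hg t (k + 1)) _ (hg t' (k + 1))
    set j : ℝ := (N t' (k + 1) : ℝ) - N t (k + 1) with hj
    have hj1 : 1 ≤ j := by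
      have : ((N t (k + 1) + 1 : ℕ) : ℝ) ≤ N t' (k + 1) := by exact_mod_cast hlt
      push_cast at this; linarith
    have hmpos : (0 : ℝ) < m k := by have := hm k; positivity
    have hjm : j ≤ m k := by
      have h1 : N t' (k + 1) < N t (k + 1) + m k := by
        have e1 := Nat.div_add_mod (N t (k + 1)) (m k)
        have e2 := Nat.div_add_mod (N t' (k + 1)) (m k)
        have := Nat.mod_lt (N t' (k + 1)) (show m k > 0 by have := hm k; omega)
        rw [hsame] at e1
        omega
      have : (N t' (k + 1) : ℝ) ≤ N t (k + 1) + m k := by exact_mod_cast h1.le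
      linarith
    have hMp : (0 : ℝ) < M k := by exact_mod_cast hMpos k
    -- `t' - t` is less than `j + 1 ≤ 2 j` steps of size `1 / M (k + 1)`.
    have hdiff : (t' - t) * (M k * m k) ≤ 2 * j := by
      have h1 := Nat.floor_le (a := t * M (k + 1)) (by positivity)
      have h2 := Nat.lt_floor_add_one (t' * M (k + 1))
      have h3 : (M (k + 1) : ℝ) = M k * m k := by rw [hMs]; push_cast; rfl
      rw [← h3]
      simp only [hj, hN] at hj1 ⊢
      linarith
    -- Here `s ≤ 1` enters, through `j / m k ≤ (j / m k) ^ s`.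
    have hjs : j ≤ m k * (j / m k) ^ s := by
      have h0 : 0 < j / m k := by positivity
      have h1 : j / m k ≤ 1 := (div_le_one hmpos).2 hjm
      have := Real.rpow_le_rpow_of_exponent_ge h0 h1 hs1
      rw [Real.rpow_one, div_le_iff₀ hmpos] at this
      linarith
    have hfin : (t' - t) * (M k * m k) ≤ 2 * C * (ε k * j) ^ s * (M k * m k) := by
      have hprod : (ε k * j) ^ s = (m k * ε k) ^ s * (j / m k) ^ s := by
        rw [← Real.mul_rpow (by have := hε k; positivity) (by positivity)]
        congr 1; field_simp
      have hX : 0 ≤ m k * (j / m k) ^ s := by positivity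
      calc (t' - t) * (M k * m k) ≤ 2 * (m k * (j / m k) ^ s) := hdiff.trans (by linarith)
        _ ≤ 2 * ((C * ((m k * ε k) ^ s * M k)) * (m k * (j / m k) ^ s)) := by
            have := mul_le_mul_of_nonneg_right (hC k) hX
            linarith
        _ = _ := by rw [hprod]; ring
    have h5 := le_of_mul_le_mul_right hfin (by positivity)
    refine h5.trans ?_
    gcongr
    have := hε k; positivity
  have key' : ∀ t ∈ Ico (0 : ℝ) 1, ∀ t' ∈ Ico (0 : ℝ) 1,
      dist t t' ≤ 2 * C * dist (g t) (g t') ^ s := by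
    intro t ht t' ht'
    rcases lt_trichotomy t t' with h | h | h
    · rw [dist_comm, Real.dist_eq, Real.dist_eq, abs_of_pos (by linarith)]
      exact key t t' ht.1 h ht'.2
    · subst h
      simp only [dist_self]
      positivity
    · rw [Real.dist_eq, dist_comm (g t), Real.dist_eq, abs_of_pos (by linarith)]
      exact key t' t ht'.1 h ht.2
  have hinj : InjOn g (Ico 0 1) := by
    intro t ht t' ht' h
    have := key' t ht t' ht'
    rw [h, dist_self, Real.zero_rpow hs0.ne', mul_zero] at this
    exact dist_le_zero.1 this
  set f := Function.invFunOn g (Ico 0 1) with hf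
  have hleft : LeftInvOn f g (Ico 0 1) := hinj.leftInvOn_invFunOn
  have hH : HolderOnWith (2 * C).toNNReal s.toNNReal f (g '' Ico 0 1) := by
    rintro _ ⟨t, ht, rfl⟩ _ ⟨t', ht', rfl⟩
    rw [hleft ht, hleft ht', edist_dist, edist_dist, Real.coe_toNNReal _ hs0.le,
      ENNReal.ofReal_rpow_of_nonneg dist_nonneg hs0.le]
    change _ ≤ ENNReal.ofReal (2 * C) * _
    rw [← ENNReal.ofReal_mul (by positivity)]
    exact ENNReal.ofReal_le_ofReal (key' t ht t' ht')
  have himg : f '' (g '' Ico 0 1) = Ico 0 1 := hleft.image_image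
  have hdim := hH.dimH_image_le (Real.toNNReal_pos.2 hs0)
  rw [himg, Real.dimH_of_nonempty_interior (by rw [interior_Ico]; simp)] at hdim
  rw [Module.finrank_self, Nat.cast_one] at hdim
  refine le_trans ?_ (dimH_mono hgE)
  have hpos : (s.toNNReal : ENNReal) ≠ 0 := by simpa using hs0
  rwa [ENNReal.le_div_iff_mul_le (Or.inl hpos) (Or.inl ENNReal.coe_ne_top), one_mul] at hdim

/-! ### Spacing of fractions -/

/-- A sequence whose first `m` terms increase by at least `δ` grows linearly with slope `δ`. -/
lemma mul_le_sub_of_gap {f : ℕ → ℝ} {m : ℕ} {δ : ℝ} (h : ∀ i j, i < j → j < m → δ ≤ f j - f i)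
    {i j : ℕ} (hij : i ≤ j) (hj : j < m) : δ * ((j : ℝ) - i) ≤ f j - f i := by
  induction j, hij using Nat.le_induction with
  | base => simp
  | succ j hij ih =>
    have h1 := ih (by omega)
    have h2 := h j (j + 1) (by omega) hj
    push_cast
    linarith

/-- Distinct fractions with denominators at most `Q` are at distance at least `1 / Q ^ 2`. -/
lemma one_div_sq_le_sub {Q q q' : ℕ} {p p' : ℤ} (hq0 : 0 < q) (hq0' : 0 < q') (hq : q ≤ Q)
    (hq' : q' ≤ Q) (h : (p : ℝ) / q < p' / q') : 1 / (Q : ℝ) ^ 2 ≤ p' / q' - (p : ℝ) / q := by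
  have a0 : (0 : ℝ) < q := by exact_mod_cast hq0
  have a1 : (0 : ℝ) < q' := by exact_mod_cast hq0'
  have a2 : (q : ℝ) ≤ Q := by exact_mod_cast hq
  have a3 : (q' : ℝ) ≤ Q := by exact_mod_cast hq'
  rw [div_lt_div_iff₀ a0 a1] at h
  have h1 : p * q' + 1 ≤ p' * q := by exact_mod_cast h
  have h2 : (p : ℝ) * q' + 1 ≤ p' * q := by exact_mod_cast h1
  rw [div_sub_div _ _ a1.ne' a0.ne']
  have h3 : (q' : ℝ) * q ≤ (Q : ℝ) ^ 2 := by nlinarith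
  calc 1 / (Q : ℝ) ^ 2 ≤ 1 / ((q' : ℝ) * q) := by gcongr
    _ ≤ _ := by gcongr; linarith

/-! ### The Cantor construction -/

/-- One step of the Cantor construction. The number `m`, radius `r'` and spacing `ε` of the
children `closedBall (d c j) r'` of `closedBall c r` are uniform in the centre `c`; `m * ε` is at
least `r / 64`, while `r' ^ s * m ≥ 1` absorbs any loss from earlier steps. Every point
of a child satisfies the defining inequality of `jarnikSet α` for some `q > N`. -/
lemma exists_children {α s r : ℝ} (hα : 2 < α) (hs : α * s < 2) (hr : 0 < r)
    (N : ℕ) : ∃ (r' ε : ℝ) (m : ℕ) (d : ℝ → ℕ → ℝ), 0 < r' ∧ 0 < ε ∧ 2 ≤ m ∧ r / 64 ≤ m * ε ∧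
      1 ≤ r' ^ s * m ∧ ∀ c,
        (∀ j < m, Metric.closedBall (d c j) r' ⊆ Metric.closedBall c r) ∧
        (∀ i j, i < j → j < m → ∀ x ∈ Metric.closedBall (d c i) r',
          ∀ y ∈ Metric.closedBall (d c j) r', ε * ((j : ℝ) - i) ≤ |x - y|) ∧
        ∀ j < m, ∀ x ∈ Metric.closedBall (d c j) r', ∃ q : ℕ, N < q ∧
          distNearestInt (q * x) ≤ (q : ℝ) ^ (1 - α) := by
  have hcast := tendsto_natCast_atTop_atTop (R := ℝ)
  have e1 : ∀ᶠ Q : ℕ in atTop, 8 / (Q : ℝ) < r / 4 :=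
    (tendsto_const_div_atTop_nhds_zero_nat (8 : ℝ)).eventually
      (gt_mem_nhds (show (0 : ℝ) < r / 4 by positivity))
  have e2 : ∀ᶠ Q : ℕ in atTop, (Q : ℝ) ^ (-α) < r / 4 :=
    ((tendsto_rpow_neg_atTop (by linarith)).comp hcast).eventually
      (gt_mem_nhds (show (0 : ℝ) < r / 4 by positivity))
  have e3 : ∀ᶠ Q : ℕ in atTop, (Q : ℝ) ^ (-(α - 2)) < 1 / 4 :=
    ((tendsto_rpow_neg_atTop (by linarith)).comp hcast).eventually
      (gt_mem_nhds (show (0 : ℝ) < 1 / 4 by positivity))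
  have e5 : ∀ᶠ Q : ℕ in atTop, 32 / r ≤ (Q : ℝ) ^ (2 - α * s) :=
    ((tendsto_rpow_atTop (by linarith)).comp hcast).eventually (eventually_ge_atTop _)
  have e6 : ∀ᶠ Q : ℕ in atTop, 64 / r ≤ (Q : ℝ) ^ (2 : ℝ) :=
    ((tendsto_rpow_atTop (by norm_num)).comp hcast).eventually (eventually_ge_atTop _)
  obtain ⟨Q, hQ1, hQ2, hQ3, hQ4, hQ5, hQ6, hQ⟩ := (e1.and (e2.and (e3.and
    ((eventually_gt_atTop (8 * N + 8)).and (e5.and (e6.and (exists_many_fractions hr))))))).exists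
  have hQ0 : (0 : ℝ) < Q := by
    have : 0 < Q := by omega
    exact_mod_cast this
  rw [Real.rpow_two] at hQ6
  -- The fractions are taken near the middle half of `closedBall c r`, which leaves room `r / 2` on
  -- either side: `8 / Q < r / 4` for their deviation and `Q ^ (-α) < r / 4` for the new radius.
  choose G hGcard hG using fun c => hQ (c - r / 2)
  set m : ℕ := ⌈r * (Q : ℝ) ^ 2 / 32⌉₊ with hm
  have hmle : r * (Q : ℝ) ^ 2 / 32 ≤ m := Nat.le_ceil _
  have hmG : ∀ c, m ≤ (G c).card := fun c => Nat.ceil_le.2 (hGcard c)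
  set d : ℝ → ℕ → ℝ := fun c j =>
    if h : j < m then (G c).orderEmbOfCardLe (hmG c) ⟨j, h⟩ else c with hd
  have hdmem : ∀ c, ∀ j < m, d c j ∈ G c := by
    intro c j hj
    simp only [hd, dif_pos hj]
    exact Finset.orderEmbOfCardLe_mem _ _ _
  -- The new radius is small compared with the gap `1 / Q ^ 2`, because `α > 2`.
  have hr' : (Q : ℝ) ^ (-α) ≤ 1 / (4 * (Q : ℝ) ^ 2) := by
    have : (Q : ℝ) ^ (-α) = (Q : ℝ) ^ (-(α - 2)) * (1 / (Q : ℝ) ^ 2) := by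
      rw [one_div, ← Real.rpow_two, ← Real.rpow_neg hQ0.le, ← Real.rpow_add hQ0]
      congr 1; ring
    rw [this, ← one_div_mul_one_div]
    gcongr
  have hgap : ∀ c i j, i < j → j < m → 1 / (Q : ℝ) ^ 2 ≤ d c j - d c i := by
    intro c i j hij hj
    have hlt : d c i < d c j := by
      simp only [hd, dif_pos hj, dif_pos (hij.trans hj)]
      exact ((G c).orderEmbOfCardLe (hmG c)).strictMono hij
    obtain ⟨p, q, h1, h2, h3, -⟩ := hG c _ (hdmem c i (hij.trans hj))
    obtain ⟨p', q', h1', h2', h3', -⟩ := hG c _ (hdmem c j hj)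
    rw [h3, h3'] at hlt ⊢
    exact one_div_sq_le_sub (by omega) (by omega) h2 h2' hlt
  refine ⟨(Q : ℝ) ^ (-α), 1 / (2 * (Q : ℝ) ^ 2), m, d, by positivity, by positivity, ?_, ?_, ?_, ?_⟩
  · have : (2 : ℝ) ≤ m := by
      rw [div_le_iff₀ hr] at hQ6
      linarith
    exact_mod_cast this
  · rw [mul_one_div, le_div_iff₀ (by positivity)]
    linarith
  · rw [div_le_iff₀ hr] at hQ5
    have h1 : (Q : ℝ) ^ (2 - α * s) = ((Q : ℝ) ^ (-α)) ^ s * (Q : ℝ) ^ 2 := by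
      rw [← Real.rpow_mul hQ0.le, ← Real.rpow_two, ← Real.rpow_add hQ0]
      congr 1; ring
    calc (1 : ℝ) ≤ ((Q : ℝ) ^ (-α)) ^ s * (r * (Q : ℝ) ^ 2 / 32) := by
          rw [h1] at hQ5
          linarith
      _ ≤ _ := by gcongr
  intro c
  refine ⟨?_, ?_, ?_⟩
  · intro j hj
    obtain ⟨p, q, h1, h2, h3, h4, h5⟩ := hG c _ (hdmem c j hj)
    have hq0 : (0 : ℝ) < q := by
      have : 0 < q := by omega
      exact_mod_cast this
    have hqQ : (1 : ℝ) / q ≤ 8 / Q := by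
      rw [div_le_div_iff₀ hq0 hQ0]
      have : (Q : ℝ) ≤ 8 * q := by exact_mod_cast h1.le
      linarith
    apply Metric.closedBall_subset_closedBall'
    have hdist : dist (d c j) c ≤ 3 * r / 4 := by
      rw [h3, Real.dist_eq, abs_le]
      have e4 : c - r / 2 - 1 / q ≤ (p : ℝ) / q := by
        rw [le_div_iff₀ hq0, sub_mul _ _ (q : ℝ), one_div_mul_cancel hq0.ne']
        exact h4
      have e5 : (p : ℝ) / q ≤ c - r / 2 + r + 1 / q := by
        rw [div_le_iff₀ hq0, add_mul _ _ (q : ℝ), one_div_mul_cancel hq0.ne']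
        exact h5
      constructor <;> linarith
    linarith
  · intro i j hij hj x hx y hy
    have h1 := mul_le_sub_of_gap (f := d c) (hgap c) hij.le hj
    rw [Metric.mem_closedBall, Real.dist_eq] at hx hy
    have hx' := abs_le.1 hx
    have hy' := abs_le.1 hy
    have hji : (1 : ℝ) ≤ (j : ℝ) - i := by
      have : ((i + 1 : ℕ) : ℝ) ≤ j := by exact_mod_cast hij
      push_cast at this; linarith
    have h2 : 1 / (2 * (Q : ℝ) ^ 2) ≤ 1 / (2 * (Q : ℝ) ^ 2) * ((j : ℝ) - i) :=
      le_mul_of_one_le_right (by positivity) hji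
    have h3 : 1 / (Q : ℝ) ^ 2 * ((j : ℝ) - i) = 2 * (1 / (2 * (Q : ℝ) ^ 2) * ((j : ℝ) - i)) := by
      field_simp
    have h4 : 1 / (2 * (Q : ℝ) ^ 2) = 2 * (1 / (4 * (Q : ℝ) ^ 2)) := by
      field_simp; norm_num
    rw [abs_sub_comm]
    refine le_trans ?_ (le_abs_self _)
    linarith
  · intro j hj x hx
    obtain ⟨p, q, h1, h2, h3, -⟩ := hG c _ (hdmem c j hj)
    have hq0 : (0 : ℝ) < q := by
      have : 0 < q := by omega
      exact_mod_cast this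
    refine ⟨q, by omega, ?_⟩
    rw [Metric.mem_closedBall, Real.dist_eq, h3] at hx
    have hxq : |x - (p : ℝ) / q| ≤ (q : ℝ) ^ (-α) :=
      hx.trans (Real.rpow_le_rpow_of_nonpos hq0 (by exact_mod_cast h2) (by linarith))
    have e : (q : ℝ) * x - p = q * (x - p / q) := by field_simp
    calc distNearestInt (q * x) ≤ |(q : ℝ) * x - p| := round_le _ _
      _ = q * |x - p / q| := by rw [e, abs_mul, abs_of_pos hq0]
      _ ≤ q * (q : ℝ) ^ (-α) := by gcongr
      _ = (q : ℝ) ^ (1 - α) := by rw [sub_eq_add_neg, Real.rpow_add hq0, Real.rpow_one]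

/-- Iterating `exists_children` from `[a, b]`, with `N = k` at step `k`, gives a Cantor set inside
`jarnikSet α ∩ [a, b]` to which `le_dimH_of_cantor` applies. -/
lemma le_dimH_jarnikSet_inter_Icc {α s a b : ℝ} (hα : 2 < α) (hs0 : 0 < s) (hs : α * s < 2)
    (hab : a < b) (hJ : Icc a b ⊆ Icc 0 1) :
    ENNReal.ofReal s ≤ dimH (jarnikSet α ∩ Icc a b) := by
  have hs1 : s ≤ 1 := by nlinarith
  -- The positivity of `r` is moved inside, so that `choose` gives functions of `r` and `N` alone.
  have hstep : ∀ (r : ℝ) (N : ℕ), ∃ (r' ε : ℝ) (m : ℕ) (d : ℝ → ℕ → ℝ), 0 < r → 0 < r' ∧ 0 < ε ∧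
      2 ≤ m ∧ r / 64 ≤ m * ε ∧ 1 ≤ r' ^ s * m ∧ ∀ c,
        (∀ j < m, Metric.closedBall (d c j) r' ⊆ Metric.closedBall c r) ∧
        (∀ i j, i < j → j < m → ∀ x ∈ Metric.closedBall (d c i) r',
          ∀ y ∈ Metric.closedBall (d c j) r', ε * ((j : ℝ) - i) ≤ |x - y|) ∧
        ∀ j < m, ∀ x ∈ Metric.closedBall (d c j) r', ∃ q : ℕ, N < q ∧
          distNearestInt (q * x) ≤ (q : ℝ) ^ (1 - α) := by
    intro r N
    by_cases hr : 0 < r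
    · obtain ⟨r', ε, m, d, h⟩ := exists_children hα hs hr N
      exact ⟨r', ε, m, d, fun _ => h⟩
    · exact ⟨0, 0, 0, fun _ _ => 0, fun h => absurd h hr⟩
  choose r' ε m d H using hstep
  set r₀ : ℝ := (b - a) / 2 with hr₀
  have hr₀pos : 0 < r₀ := by simp only [hr₀]; linarith
  -- `ρ k`, `μ k`, `c k n`: radius at level `k`, number of children, centre of the `n`-th interval.
  let ρ : ℕ → ℝ := fun k => Nat.rec r₀ (fun k x => r' x k) k
  have hρs : ∀ k, ρ (k + 1) = r' (ρ k) k := fun k => rfl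
  have hρ : ∀ k, 0 < ρ k := by
    intro k
    induction k with
    | zero => exact hr₀pos
    | succ k ih => rw [hρs]; exact (H _ k ih).1
  let μ : ℕ → ℕ := fun k => m (ρ k) k
  let c : ℕ → ℕ → ℝ := fun k => Nat.rec (fun _ => (a + b) / 2)
    (fun k ck n => d (ρ k) k (ck (n / μ k)) (n % μ k)) k
  have hcs : ∀ k n, c (k + 1) n = d (ρ k) k (c k (n / μ k)) (n % μ k) := fun k n => rfl
  have hμ : ∀ k, 2 ≤ μ k := fun k => (H _ k (hρ k)).2.2.1
  have hmod : ∀ k n, n % μ k < μ k := fun k n => Nat.mod_lt _ (by have := hμ k; omega)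
  have hI0 : ∀ n, Metric.closedBall (c 0 n) (ρ 0) = Icc a b := by
    intro n
    change Metric.closedBall ((a + b) / 2) ((b - a) / 2) = _
    rw [← Real.Icc_eq_closedBall]
  -- The constant needs `(64 / r₀) ^ s` for level `0` only; at level `k + 1` the factor
  -- `μ k ≥ (ρ (k + 1)) ^ (-s)` of the product alone suffices.
  refine le_dimH_of_cantor (C := (64 / r₀) ^ s + 64 ^ s) hs0 hs1 μ hμ
    (fun k n => Metric.closedBall (c k n) (ρ k)) (fun k n => isCompact_closedBall _ _)
    (fun k n => ⟨_, Metric.mem_closedBall_self (hρ k).le⟩) ?_ (fun k => ε (ρ k) k)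
    (fun k => (H _ k (hρ k)).2.1) ?_ (by positivity) ?_ ?_
  · intro k n
    exact ((H _ k (hρ k)).2.2.2.2.2 (c k (n / μ k))).1 _ (hmod k n)
  · intro k n n' hnn' hdiv x hx y hy
    have hlt : n % μ k < n' % μ k := by
      have e1 := Nat.div_add_mod n (μ k)
      have e2 := Nat.div_add_mod n' (μ k)
      rw [hdiv] at e1
      omega
    simp only [hcs, hρs] at hx hy
    rw [hdiv] at hx
    have h1 := ((H _ k (hρ k)).2.2.2.2.2 (c k (n' / μ k))).2.1 _ _ hlt (hmod k n') x hx y hy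
    have h2 : (n' : ℝ) - n = (n' % μ k : ℕ) - (n % μ k : ℕ) := by
      have e1 : ((μ k * (n / μ k) + n % μ k : ℕ) : ℝ) = n := by rw [Nat.div_add_mod]
      have e2 : ((μ k * (n' / μ k) + n' % μ k : ℕ) : ℝ) = n' := by rw [Nat.div_add_mod]
      rw [hdiv] at e1
      push_cast at e1 e2 ⊢
      linarith
    rw [h2]
    exact h1
  · intro k
    have hbase : (ρ k / 64) ^ s ≤ (μ k * ε (ρ k) k) ^ s :=
      Real.rpow_le_rpow (by have := hρ k; positivity) (H _ k (hρ k)).2.2.2.1 hs0.le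
    suffices h : 1 ≤ ((64 / r₀) ^ s + 64 ^ s) *
        ((ρ k / 64) ^ s * ((∏ i ∈ Finset.range k, μ i : ℕ) : ℝ)) by
      refine h.trans ?_
      gcongr
    rcases k with _ | k
    · have h1 : (64 / r₀) ^ s * (ρ 0 / 64) ^ s = 1 := by
        rw [← Real.mul_rpow (by positivity) (by have := hρ 0; positivity)]
        change (64 / r₀ * (r₀ / 64)) ^ s = 1
        rw [show 64 / r₀ * (r₀ / 64) = 1 by field_simp, Real.one_rpow]
      have h2 : 0 ≤ (64 : ℝ) ^ s * (ρ 0 / 64) ^ s := by have := hρ 0; positivity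
      simp only [Finset.range_zero, Finset.prod_empty, Nat.cast_one, mul_one]
      linarith
    · have h1 : 1 ≤ ρ (k + 1) ^ s * μ k := (H _ k (hρ k)).2.2.2.2.1
      have h2 : μ k ≤ ∏ i ∈ Finset.range (k + 1), μ i := by
        rw [Finset.prod_range_succ]
        exact Nat.le_mul_of_pos_left _ (Finset.prod_pos fun i _ => by have := hμ i; omega)
      have h2' : (μ k : ℝ) ≤ ((∏ i ∈ Finset.range (k + 1), μ i : ℕ) : ℝ) := by exact_mod_cast h2
      have hpos := hρ (k + 1)
      rw [Real.div_rpow hpos.le (by norm_num)]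
      have h64 : (0 : ℝ) < 64 ^ s := by positivity
      calc (1 : ℝ) ≤ ρ (k + 1) ^ s * μ k := h1
        _ = 64 ^ s * (ρ (k + 1) ^ s / 64 ^ s * μ k) := by field_simp
        _ ≤ ((64 / r₀) ^ s + 64 ^ s) * (ρ (k + 1) ^ s / 64 ^ s *
              ((∏ i ∈ Finset.range (k + 1), μ i : ℕ) : ℝ)) := by
            gcongr
            have : 0 ≤ (64 / r₀) ^ s := by positivity
            linarith
  · intro x hx
    have hxab : x ∈ Icc a b := by
      obtain ⟨n, hn⟩ := hx 0
      rwa [hI0] at hn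
    refine ⟨⟨hJ hxab, Set.infinite_of_forall_exists_gt fun N => ?_⟩, hxab⟩
    obtain ⟨n, hn⟩ := hx (N + 1)
    obtain ⟨q, hq, hq'⟩ := ((H _ N (hρ N)).2.2.2.2.2 (c N (n / μ N))).2.2 _ (hmod N n) x hn
    exact ⟨q, ⟨by omega, hq'⟩, hq⟩

lemma dimH_jarnikSet_inter_Icc {α a b : ℝ} (hα : 2 < α) (hab : a < b) (hJ : Icc a b ⊆ Icc 0 1) :
    dimH (jarnikSet α ∩ Icc a b) = ENNReal.ofReal (2 / α) := by
  have hα0 : 0 < α := by linarith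
  refine le_antisymm ((dimH_mono inter_subset_left).trans (dimH_jarnikSet_le hα)) ?_
  refine le_of_forall_lt fun c hc => ?_
  obtain ⟨t, ht1, ht2⟩ := ENNReal.lt_iff_exists_nnreal_btwn.1 hc
  have ht : (t : ℝ) < 2 / α := by
    have h := (ENNReal.toReal_lt_toReal ENNReal.coe_ne_top ENNReal.ofReal_ne_top).2 ht2
    rwa [ENNReal.coe_toReal, ENNReal.toReal_ofReal (by positivity)] at h
  have ht0 : (0 : ℝ) < t := by
    have h : (0 : ENNReal) < t := lt_of_le_of_lt zero_le ht1
    exact_mod_cast h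
  rw [lt_div_iff₀ hα0] at ht
  refine lt_of_lt_of_le ht1 ?_
  have h := le_dimH_jarnikSet_inter_Icc hα ht0 (by linarith) hab hJ
  rwa [ENNReal.ofReal_coe_nnreal] at h

/-- Jarník's theorem: for `α > 2`, `dim_H Q_α = 2/α`; moreover `Q_α` is dense in `[0,1]` and
`dim_H (Q_α ∩ J) = 2/α` for every nondegenerate subinterval `J ⊆ [0,1]`. -/
theorem stmt_13 (α : ℝ) (hα : 2 < α) :
    dimH (jarnikSet α) = ENNReal.ofReal (2 / α) ∧
    (∀ x ∈ Icc (0 : ℝ) 1, x ∈ closure (jarnikSet α)) ∧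
    (∀ J : Set ℝ, J ⊆ Icc (0 : ℝ) 1 → J.OrdConnected → J.Nontrivial →
      dimH (jarnikSet α ∩ J) = ENNReal.ofReal (2 / α)) := by
  refine ⟨le_antisymm (dimH_jarnikSet_le hα) ?_, ?_, ?_⟩
  · rw [← dimH_jarnikSet_inter_Icc hα zero_lt_one Subset.rfl]
    exact dimH_mono inter_subset_left
  · intro x hx
    rw [Metric.mem_closure_iff]
    intro δ hδ
    have hab : max 0 (x - δ / 2) < min 1 (x + δ / 2) := by
      obtain ⟨h0, h1⟩ := hx
      rw [max_lt_iff, lt_min_iff, lt_min_iff]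
      refine ⟨⟨?_, ?_⟩, ?_, ?_⟩ <;> linarith
    have hdim := dimH_jarnikSet_inter_Icc hα hab
      (Icc_subset_Icc (le_max_left _ _) (min_le_left _ _))
    obtain ⟨y, hy, hy1, hy2⟩ : (jarnikSet α ∩
        Icc (max 0 (x - δ / 2)) (min 1 (x + δ / 2))).Nonempty := by
      rw [nonempty_iff_ne_empty]
      intro h
      rw [h, dimH_empty] at hdim
      have : 0 < ENNReal.ofReal (2 / α) := ENNReal.ofReal_pos.2 (by positivity)
      exact this.ne hdim
    refine ⟨y, hy, ?_⟩
    have h1 := (le_max_right _ _).trans hy1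
    have h2 := hy2.trans (min_le_right _ _)
    rw [Real.dist_eq, abs_lt]
    constructor <;> linarith
  · intro J hJ hconn hnt
    obtain ⟨a, ha, b, hb, hab⟩ := hnt.exists_lt
    have hsub : Icc a b ⊆ J := hconn.out ha hb
    refine le_antisymm ((dimH_mono inter_subset_left).trans (dimH_jarnikSet_le hα)) ?_
    rw [← dimH_jarnikSet_inter_Icc hα hab (hsub.trans hJ)]
    exact dimH_mono (inter_subset_inter_right _ hsub)
end

section
/- For every nondegenerate interval I ⊆ ℝ and every θ ∈ [0,1] there exists a max-family (f_n : I → ℝ)_{n=1}^∞ of continuous functions such that dim_H(I_f ∩ U) = θ for every nonempty open subinterval U of I. -/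
/-!
Take closed sets `F j` of Hausdorff dimension `θ`, countably many, such that every nonempty open
interval contains one of them: these are the images of one compact set of dimension `θ` under
`x ↦ q + x / (m + 1)`, `q ∈ ℚ`, `m ∈ ℕ` (`exists_isCompact_dimH`, `exists_closed_seq`).
Let `N j` be an open neighbourhood of `F j` and `g j` a continuous cutoff equal to `1` on `F j` and
to `0` off `N j`. The family is
`f n x = ∑ j < n, g j x / (dist (x, F j) + 1 / (n + 1))`.

* It increases with `n` and diverges on every `F j`, so the divergence set has dimension at least
  `θ` in every open interval.
* Near a point `q ∈ F j` the `j`-th term is at least of order `1 / (|x - q| + 1 / (n + 1))`, whose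
  integral grows like `log n`; hence the integrals diverge (`tendsto_integral_spike`).
* A point in no `F j` at which the family diverges lies in infinitely many `N j`. The `N j` are
  chosen as unions of covers of `F j` so efficient that the set of such points has dimension at
  most `θ` (`exists_nhds_dimH_le`). So the divergence set has dimension at most `θ`.

For `0 < θ < 1` the compact set is the set `C r` of sums `∑ xᵢ r ^ (i + 1)`, `xᵢ ∈ {0, 1}`, with
`r = 2 ^ (-1 / θ)`. If `r = s ^ ρ` and `s < 1 / 2`, the digit-preserving map `C s → C r` is
`ρ`-Hölder, so `dim (C r) ≤ dim (C s) / ρ` (`dimH_cantorSetR_le`). Comparing `C r` with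
`C (1 / 2) ⊇ [0, 1]` gives `dim (C r) ≥ θ`. Comparing it with the set for a parameter `u ∈ (θ, 1)`,
whose dimension is at most `1`, gives `dim (C r) ≤ θ / u`, and `u → 1`.
-/

open Set Filter Topology MeasureTheory

/-- `limSet I f` is the set `I_f = {x ∈ I : lim_{n→∞} f_n(x) = +∞}`. -/
def limSet (I : Set ℝ) (f : ℕ → ℝ → ℝ) : Set ℝ :=
  {x ∈ I | Tendsto (fun n => f n x) atTop atTop}

/-- A max-family on `I`: a nondecreasing sequence of continuous functions whose integrals
over every nondegenerate subinterval of `I` tend to `+∞`. -/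
def IsMaxFamily (I : Set ℝ) (f : ℕ → ℝ → ℝ) : Prop :=
  (∀ n, ContinuousOn (f n) I) ∧
  (∀ n, ∀ x ∈ I, f n x ≤ f (n + 1) x) ∧
  (∀ x ∈ I, ∀ y ∈ I, x < y →
    Tendsto (fun n => ∫ t in x..y, f n t) atTop atTop)

/-! ### Cantor sets of prescribed dimension -/

theorem abs_tsum_le {r : ℝ} (h0 : 0 < r) (h1 : r < 1) {d : ℕ → ℝ} (hd : ∀ i, |d i| ≤ 1) {n : ℕ}
    (hn : ∀ i < n, d i = 0) : |∑' i, d i * r ^ (i + 1)| ≤ r ^ (n + 1) / (1 - r) := by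
  have hs : Summable fun i => d i * r ^ (i + 1) := by
    refine Summable.of_norm_bounded (g := fun i => r ^ (i + 1)) ?_ fun i => ?_
    · exact (summable_nat_add_iff 1).2 (summable_geometric_of_lt_one h0.le h1)
    · rw [norm_mul, Real.norm_eq_abs, Real.norm_of_nonneg (by positivity)]
      exact mul_le_of_le_one_left (by positivity) (hd i)
  rw [← hs.sum_add_tsum_nat_add n, Finset.sum_eq_zero fun i hi => by
    rw [hn i (Finset.mem_range.1 hi), zero_mul], zero_add, ← Real.norm_eq_abs, div_eq_mul_inv]
  refine tsum_of_norm_bounded ((hasSum_geometric_of_lt_one h0.le h1).mul_left _) fun i => ?_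
  rw [norm_mul, Real.norm_eq_abs, Real.norm_of_nonneg (by positivity), ← pow_add,
    show i + n + 1 = n + 1 + i by ring]
  exact mul_le_of_le_one_left (by positivity) (hd _)

/-- If `d n = ± 1` is the first nonzero coefficient, its term dominates the rest of the series. The
bound is useful only for `r < 1 / 2`. -/
theorem le_abs_tsum {r : ℝ} (h0 : 0 < r) (h1 : r < 1) {d : ℕ → ℝ} (hd : ∀ i, |d i| ≤ 1) {n : ℕ}
    (hn : ∀ i < n, d i = 0) (hdn : |d n| = 1) :
    r ^ (n + 1) * ((1 - 2 * r) / (1 - r)) ≤ |∑' i, d i * r ^ (i + 1)| := by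
  have hs : Summable fun i => d i * r ^ (i + 1) := by
    refine Summable.of_norm_bounded (g := fun i => r ^ (i + 1)) ?_ fun i => ?_
    · exact (summable_nat_add_iff 1).2 (summable_geometric_of_lt_one h0.le h1)
    · rw [norm_mul, Real.norm_eq_abs, Real.norm_of_nonneg (by positivity)]
      exact mul_le_of_le_one_left (by positivity) (hd i)
  have hrest := abs_tsum_le h0 h1 (d := fun i => if i = n then 0 else d i) (n := n + 1)
    (fun i => by split_ifs <;> simp [hd]) (fun i hi => by
      split_ifs with h
      · rfl
      · exact hn i (by omega))
  rw [hs.tsum_eq_add_tsum_ite n]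
  simp only [ite_mul, zero_mul] at hrest
  have h2 : |d n * r ^ (n + 1)| = r ^ (n + 1) := by
    rw [abs_mul, hdn, one_mul, abs_of_pos (by positivity)]
  have h3 := abs_sub_abs_le_abs_add (d n * r ^ (n + 1))
    (∑' i, if i = n then 0 else d i * r ^ (i + 1))
  have h4 : r ^ (n + 1) * ((1 - 2 * r) / (1 - r)) = r ^ (n + 1) - r ^ (n + 1 + 1) / (1 - r) := by
    have : 1 - r ≠ 0 := by linarith
    field_simp
    ring
  linarith

/-- The point `∑ xᵢ r ^ (i + 1)` with digit sequence `x`; for `0 < r < 1` the series converges. -/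
noncomputable def cantorPt (r : ℝ) (x : ℕ → Fin 2) : ℝ := ∑' i, ((x i : ℕ) : ℝ) * r ^ (i + 1)

/-- The set of sums `∑ xᵢ r ^ (i + 1)` with digits `xᵢ ∈ {0, 1}`. For `r < 1 / 2` it is the
self-similar Cantor set with contraction ratio `r`, and for `r = 1 / 2` it is `[0, 1]`. -/
def cantorSetR (r : ℝ) : Set ℝ := range (cantorPt r)

theorem summable_cantorPt {r : ℝ} (h0 : 0 < r) (h1 : r < 1) (x : ℕ → Fin 2) :
    Summable fun i => ((x i : ℕ) : ℝ) * r ^ (i + 1) := by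
  refine Summable.of_nonneg_of_le (fun i => by positivity) (fun i => ?_)
    ((summable_nat_add_iff 1).2 (summable_geometric_of_lt_one h0.le h1))
  refine mul_le_of_le_one_left (by positivity) ?_
  exact_mod_cast (by omega : (x i : ℕ) ≤ 1)

theorem isCompact_cantorSetR {r : ℝ} (h0 : 0 < r) (h1 : r < 1) : IsCompact (cantorSetR r) := by
  refine isCompact_range (continuous_tsum (u := fun i => r ^ (i + 1)) (fun i => by fun_prop)
    ((summable_nat_add_iff 1).2 (summable_geometric_of_lt_one h0.le h1)) fun i x => ?_)
  rw [Real.norm_of_nonneg (by positivity)]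
  refine mul_le_of_le_one_left (by positivity) ?_
  exact_mod_cast (by omega : (x i : ℕ) ≤ 1)

/-- The distance between the points of two digit sequences is comparable to `r ^ (n + 1)`, where the
index `n` of the first differing digit does not depend on `r`. -/
theorem cantorPt_bounds {x y : ℕ → Fin 2} (h : x ≠ y) : ∃ n : ℕ, ∀ r : ℝ, 0 < r → r < 1 →
    |cantorPt r x - cantorPt r y| ≤ r ^ (n + 1) / (1 - r) ∧
    r ^ (n + 1) * ((1 - 2 * r) / (1 - r)) ≤ |cantorPt r x - cantorPt r y| := by
  have key : ∀ a b : Fin 2, |((a : ℕ) : ℝ) - ((b : ℕ) : ℝ)| ≤ 1 ∧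
      (a ≠ b → |((a : ℕ) : ℝ) - ((b : ℕ) : ℝ)| = 1) := by
    intro a b
    fin_cases a <;> fin_cases b <;> simp
  refine ⟨PiNat.firstDiff x y, fun r h0 h1 => ?_⟩
  have hz : ∀ i < PiNat.firstDiff x y, ((x i : ℕ) : ℝ) - ((y i : ℕ) : ℝ) = 0 := fun i hi => by
    rw [PiNat.apply_eq_of_lt_firstDiff hi, sub_self]
  have e : cantorPt r x - cantorPt r y
      = ∑' i, (((x i : ℕ) : ℝ) - ((y i : ℕ) : ℝ)) * r ^ (i + 1) := by
    simp only [sub_mul]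
    exact ((summable_cantorPt h0 h1 x).tsum_sub (summable_cantorPt h0 h1 y)).symm
  rw [e]
  exact ⟨abs_tsum_le h0 h1 (fun i => (key _ _).1) hz,
    le_abs_tsum h0 h1 (fun i => (key _ _).1) hz ((key _ _).2 (PiNat.apply_firstDiff_ne h))⟩

/-- The map `C s → C r` that keeps the digits is `ρ`-Hölder when `r = s ^ ρ` and `s < 1 / 2`. -/
theorem dimH_cantorSetR_le {r s ρ : ℝ} (hs0 : 0 < s) (hs : s < 1 / 2) (hr1 : r < 1)
    (hρ : 0 < ρ) (h : r = s ^ ρ) :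
    dimH (cantorSetR r) ≤ dimH (cantorSetR s) / ENNReal.ofReal ρ := by
  have hr0 : 0 < r := h ▸ Real.rpow_pos_of_pos hs0 ρ
  have hs1 : s < 1 := by linarith
  have hc : 0 < (1 - 2 * s) / (1 - s) := div_pos (by linarith) (by linarith)
  have hinj : Function.Injective (cantorPt s) := by
    intro x y hxy
    by_contra hne
    obtain ⟨n, hn⟩ := cantorPt_bounds hne
    have := (hn s hs0 hs1).2
    rw [hxy, sub_self, abs_zero] at this
    exact absurd this (not_le.2 (by positivity))
  set g : ℝ → ℝ := fun a => cantorPt r (Function.invFun (cantorPt s) a) with hg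
  have hgx : ∀ x, g (cantorPt s x) = cantorPt r x := fun x => by
    simp only [hg, Function.leftInverse_invFun hinj x]
  have himg : g '' cantorSetR s = cantorSetR r := by
    rw [cantorSetR, ← range_comp, cantorSetR]
    congr 1
    exact funext hgx
  set K : ℝ := (((1 - 2 * s) / (1 - s))⁻¹) ^ ρ / (1 - r) with hK
  have hK0 : 0 ≤ K := div_nonneg (by positivity) (by linarith)
  have hhol : HolderOnWith K.toNNReal ρ.toNNReal g (cantorSetR s) := by
    rintro _ ⟨x, rfl⟩ _ ⟨y, rfl⟩
    rw [hgx, hgx]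
    by_cases hxy : x = y
    · simp [hxy]
    obtain ⟨n, hn⟩ := cantorPt_bounds hxy
    have h1 := (hn r hr0 hr1).1
    have h2 := (hn s hs0 hs1).2
    rw [edist_dist, edist_dist, Real.dist_eq, Real.dist_eq, Real.coe_toNNReal _ hρ.le,
      ENNReal.ofReal_rpow_of_nonneg (abs_nonneg _) hρ.le]
    change _ ≤ ENNReal.ofReal K * _
    rw [← ENNReal.ofReal_mul hK0]
    refine ENNReal.ofReal_le_ofReal (h1.trans ?_)
    have h3 : s ^ (n + 1) ≤ ((1 - 2 * s) / (1 - s))⁻¹ * |cantorPt s x - cantorPt s y| := by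
      rw [inv_mul_eq_div, le_div_iff₀ hc]
      exact h2
    have h4 : r ^ (n + 1) = (s ^ (n + 1)) ^ ρ := by
      rw [h, ← Real.rpow_natCast, ← Real.rpow_natCast, ← Real.rpow_mul hs0.le,
        ← Real.rpow_mul hs0.le, mul_comm]
    have h5 := Real.rpow_le_rpow (by positivity) h3 hρ.le
    rw [Real.mul_rpow (by positivity) (abs_nonneg _), ← h4] at h5
    rw [hK, div_mul_eq_mul_div]
    exact div_le_div_of_nonneg_right h5 (by linarith)
  have := hhol.dimH_image_le (by simpa using hρ)
  rwa [himg] at this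

theorem dimH_Icc : dimH (Icc (0 : ℝ) 1) = 1 := by
  rw [Real.dimH_of_nonempty_interior (by simp)]
  simp

theorem cantorSetR_half : cantorSetR (1 / 2) ⊇ Icc 0 1 := by
  intro y hy
  obtain ⟨x, -, hx⟩ := Real.ofDigits_SurjOn (b := 2) (by norm_num) hy
  refine ⟨x, ?_⟩
  rw [← hx]
  simp [cantorPt, Real.ofDigits, Real.ofDigitsTerm]

theorem exists_isCompact_dimH {θ : ℝ} (hθ : θ ∈ Icc (0 : ℝ) 1) :
    ∃ C : Set ℝ, IsCompact C ∧ C.Nonempty ∧ dimH C = ENNReal.ofReal θ := by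
  rcases hθ.1.eq_or_lt with rfl | h0
  · exact ⟨{0}, isCompact_singleton, singleton_nonempty _, by simp⟩
  rcases hθ.2.eq_or_lt with rfl | h1
  · exact ⟨Icc 0 1, isCompact_Icc, by simp, by simp [dimH_Icc]⟩
  -- the contraction ratio of the Cantor set of dimension `t`
  set R : ℝ → ℝ := fun t => (1 / 2 : ℝ) ^ (1 / t) with hR
  have hR0 : ∀ t, 0 < R t := fun t => by positivity
  have hRlt : ∀ t, 0 < t → t < 1 → R t < 1 / 2 := fun t ht ht1 => by
    have := Real.rpow_lt_rpow_of_exponent_gt (x := (1 / 2 : ℝ)) (by norm_num) (by norm_num)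
      ((one_lt_div ht).2 ht1)
    simpa [hR] using this
  have hRpow : ∀ t u, 0 < t → 0 < u → R t = R u ^ (u / t) := fun t u ht hu => by
    simp only [hR]
    rw [← Real.rpow_mul (by norm_num)]
    congr 1
    field_simp
  have hle1 : ∀ s : Set ℝ, dimH s ≤ 1 := fun s =>
    (dimH_mono (subset_univ s)).trans_eq Real.dimH_univ
  refine ⟨cantorSetR (R θ), isCompact_cantorSetR (hR0 θ) (by linarith [hRlt θ h0 h1]),
    range_nonempty _, le_antisymm ?_ ?_⟩
  · have key : ∀ u ∈ Ioo θ 1, dimH (cantorSetR (R θ)) ≤ ENNReal.ofReal (θ / u) := by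
      intro u hu
      have hu0 : 0 < u := h0.trans hu.1
      have := dimH_cantorSetR_le (hR0 u) (hRlt u hu0 hu.2) (by linarith [hRlt θ h0 h1])
        (div_pos hu0 h0) (hRpow θ u h0 hu0)
      refine this.trans ((ENNReal.div_le_div_right (hle1 _) _).trans_eq ?_)
      rw [one_div, ← ENNReal.ofReal_inv_of_pos (div_pos hu0 h0), inv_div]
    have hlim : Tendsto (fun u : ℝ => ENNReal.ofReal (θ / u)) (𝓝[<] 1)
        (𝓝 (ENNReal.ofReal (θ / 1))) := by
      refine (ENNReal.continuous_ofReal.tendsto _).comp (Tendsto.mono_left ?_ nhdsWithin_le_nhds)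
      exact tendsto_const_nhds.div tendsto_id one_ne_zero
    rw [div_one] at hlim
    refine ge_of_tendsto hlim ?_
    filter_upwards [Ioo_mem_nhdsLT h1] with u hu using key u hu
  · have h12 : (1 / 2 : ℝ) = R θ ^ θ := by
      simp only [hR]
      rw [← Real.rpow_mul (by norm_num), one_div_mul_cancel h0.ne', Real.rpow_one]
    have := dimH_cantorSetR_le (hR0 θ) (hRlt θ h0 h1) (by norm_num) h0 h12
    have h3 := (dimH_Icc.symm.le.trans (dimH_mono cantorSetR_half)).trans this
    rwa [ENNReal.le_div_iff_mul_le (by simp [h0]) (by simp), one_mul] at h3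

/-! ### Neighbourhoods with small limsup -/

/-- The size `δ` of a thickening that increases the diameter `d`, and its `s`-th power, by at most
`e`. -/
theorem exists_delta {s : ℝ} (hs : 0 < s) {d e : ENNReal} (hd : d ≤ 1) (he : 0 < e) :
    ∃ δ : NNReal, 0 < δ ∧ d + 2 * δ ≤ d + e ∧ (d + 2 * δ) ^ s ≤ d ^ s + e := by
  have hlim : Tendsto (fun δ : NNReal => d + 2 * (δ : ENNReal)) (𝓝 0) (𝓝 (d + 2 * ((0 : NNReal) : ENNReal))) :=
    tendsto_const_nhds.add (ENNReal.Tendsto.const_mul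
      (ENNReal.continuous_coe.tendsto 0) (Or.inr (by simp)))
  simp only [ENNReal.coe_zero, mul_zero, add_zero] at hlim
  have hdt : d ≠ ⊤ := ne_top_of_le_ne_top ENNReal.one_ne_top hd
  have h1 : ∀ᶠ δ : NNReal in 𝓝 0, d + 2 * (δ : ENNReal) < d + e :=
    hlim.eventually_lt_const (ENNReal.lt_add_right hdt he.ne')
  have h2 : ∀ᶠ δ : NNReal in 𝓝 0, (d + 2 * (δ : ENNReal)) ^ s < d ^ s + e := by
    refine (((ENNReal.continuous_rpow_const (y := s)).tendsto d).comp hlim).eventually_lt_const ?_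
    exact ENNReal.lt_add_right (ENNReal.rpow_ne_top_of_nonneg hs.le hdt) he.ne'
  have h3 : ∀ᶠ δ : NNReal in 𝓝[>] 0, 0 < δ := self_mem_nhdsWithin
  obtain ⟨δ, ⟨ha, hb⟩, hc⟩ := (((h1.and h2).filter_mono nhdsWithin_le_nhds).and h3).exists
  exact ⟨δ, hc, ha.le, hb.le⟩

/-- A set of `s`-dimensional measure zero has an open neighbourhood that is covered by sets of small
diameter with small `s`-sum: thicken each set of an efficient cover a little. -/
theorem exists_open_cover {s : ℝ} (hs : 0 < s) {F : Set ℝ} (hF : μH[s] F = 0) {ε : ENNReal}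
    (hε : 0 < ε) (hε1 : ε ≤ 1) : ∃ (N : Set ℝ) (t : ℕ → Set ℝ), IsOpen N ∧ F ⊆ N ∧ N ⊆ ⋃ i, t i ∧
      (∀ i, Metric.ediam (t i) ≤ ε) ∧ ∑' i, Metric.ediam (t i) ^ s ≤ ε := by
  have hε2 : 0 < ε / 2 := ENNReal.half_pos hε.ne'
  rw [Measure.hausdorffMeasure_apply] at hF
  have h1 := (ENNReal.iSup_eq_zero.1 ((ENNReal.iSup_eq_zero.1 hF) (ε / 2))) hε2
  have h2 := h1.trans_lt hε2
  simp only [iInf_lt_iff] at h2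
  obtain ⟨t, hFt, hdt, hsum⟩ := h2
  obtain ⟨e, he0, hesum⟩ := ENNReal.exists_pos_sum_of_countable hε2.ne' ℕ
  have hmin : ∀ i, ∃ δ : NNReal, 0 < δ ∧ Metric.ediam (t i) + 2 * δ
      ≤ Metric.ediam (t i) + min (e i : ENNReal) (ε / 2) ∧
      (Metric.ediam (t i) + 2 * δ) ^ s ≤ Metric.ediam (t i) ^ s + min (e i : ENNReal) (ε / 2) :=
    fun i => exists_delta hs ((hdt i).trans (ENNReal.half_le_self.trans hε1))
      (lt_min (by exact_mod_cast he0 i) hε2)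
  choose δ hδ0 hδ1 hδ2 using hmin
  refine ⟨⋃ i, Metric.thickening (δ i) (t i), fun i => Metric.thickening (δ i) (t i),
    isOpen_iUnion fun i => Metric.isOpen_thickening, ?_, le_rfl, fun i => ?_, ?_⟩
  · exact hFt.trans (iUnion_mono fun i => Metric.self_subset_thickening (by exact_mod_cast hδ0 i) _)
  · calc _ ≤ Metric.ediam (t i) + 2 * δ i := Metric.ediam_thickening_le _
      _ ≤ ε / 2 + ε / 2 := (hδ1 i).trans (add_le_add (hdt i) (min_le_right _ _))
      _ = ε := ENNReal.add_halves ε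
  · calc _ ≤ ∑' i, ((⨆ _ : (t i).Nonempty, Metric.ediam (t i) ^ s) + e i) := by
          refine ENNReal.tsum_le_tsum fun i => ?_
          rcases (t i).eq_empty_or_nonempty with h | h
          · simp [h, hs]
          · rw [ciSup_pos h]
            exact (ENNReal.rpow_le_rpow (Metric.ediam_thickening_le _) hs.le).trans
              ((hδ2 i).trans (add_le_add le_rfl (min_le_left _ _)))
      _ = _ := ENNReal.tsum_add
      _ ≤ ε / 2 + ε / 2 := add_le_add hsum.le hesum.le
      _ = ε := ENNReal.add_halves ε

/-- Sets of dimension at most `θ` have open neighbourhoods whose limsup still has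
dimension at most `θ`. The neighbourhood of `F j` is covered with `(θ + 1 / (j + 1))`-sum at most
`2 ^ (-j)`, so for every `s > θ` the tails of these covers show that the limsup has
`s`-dimensional measure zero. -/
theorem exists_nhds_dimH_le {θ : ℝ} (hθ : 0 ≤ θ) (F : ℕ → Set ℝ)
    (hF : ∀ j, dimH (F j) ≤ ENNReal.ofReal θ) :
    ∃ N : ℕ → Set ℝ, (∀ j, IsOpen (N j)) ∧ (∀ j, F j ⊆ N j) ∧
      dimH {x | ∃ᶠ j in atTop, x ∈ N j} ≤ ENNReal.ofReal θ := by
  have hs0 : ∀ j : ℕ, 0 < θ + 1 / ((j : ℝ) + 1) := fun j => by positivity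
  have hz : ∀ j : ℕ, μH[θ + 1 / ((j : ℝ) + 1)] (F j) = 0 := fun j => by
    have := hausdorffMeasure_of_dimH_lt (s := F j) (d := (θ + 1 / ((j : ℝ) + 1)).toNNReal)
      ((hF j).trans_lt ((ENNReal.ofReal_lt_ofReal_iff (hs0 j)).2 (by
        have : 0 < 1 / ((j : ℝ) + 1) := by positivity
        linarith)))
    rwa [Real.coe_toNNReal _ (hs0 j).le] at this
  have hε : ∀ j : ℕ, (0 : ENNReal) < (2⁻¹ : ENNReal) ^ j := fun j => by
    exact ENNReal.pow_pos (by simp) _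
  have hε1 : ∀ j : ℕ, (2⁻¹ : ENNReal) ^ j ≤ 1 := fun j => pow_le_one₀ (by simp) (by simp)
  choose N t hNo hFN hNt hdiam hsum using fun j => exists_open_cover (hs0 j) (hz j) (hε j) (hε1 j)
  refine ⟨N, hNo, hFN, ?_⟩
  have hmeas : ∀ s : ℝ, θ < s → μH[s] {x | ∃ᶠ j in atTop, x ∈ N j} = 0 := by
    intro s hs
    have hlim0 : Tendsto (fun m : ℕ => (2⁻¹ : ENNReal) ^ m) atTop (𝓝 0) :=
      ENNReal.tendsto_pow_atTop_nhds_zero_of_lt_one (by simp)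
    have hle := Measure.hausdorffMeasure_le_liminf_tsum (ι := fun _ : ℕ => ℕ × ℕ) s
      {x | ∃ᶠ j in atTop, x ∈ N j} (l := atTop) (fun m : ℕ => (2⁻¹ : ENNReal) ^ m) hlim0
      (fun m p => t (p.1 + m) p.2)
      (Eventually.of_forall fun m p => (hdiam _ _).trans
        (pow_le_pow_right_of_le_one' (by simp) (by omega)))
      (Eventually.of_forall fun m x hx => by
        obtain ⟨j, hj, hxj⟩ := (frequently_atTop.1 hx) m
        obtain ⟨i, hi⟩ := mem_iUnion.1 (hNt j hxj)
        exact mem_iUnion.2 ⟨(j - m, i), by simpa [Nat.sub_add_cancel hj] using hi⟩)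
    refine le_antisymm (hle.trans ?_) bot_le
    -- for large `j` the exponent `s` exceeds the one used in the cover of `F j`
    have hev : ∀ᶠ m : ℕ in atTop, ∑' p : ℕ × ℕ, Metric.ediam (t (p.1 + m) p.2) ^ s
        ≤ 2 * (2⁻¹ : ENNReal) ^ m := by
      have h1 : ∀ᶠ m : ℕ in atTop, 1 / ((m : ℝ) + 1) < s - θ :=
        tendsto_one_div_add_atTop_nhds_zero_nat.eventually_lt_const (by linarith)
      filter_upwards [h1] with m hm
      rw [ENNReal.tsum_prod']
      calc _ ≤ ∑' k : ℕ, (2⁻¹ : ENNReal) ^ (k + m) := by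
            refine ENNReal.tsum_le_tsum fun k => le_trans (ENNReal.tsum_le_tsum fun i => ?_)
              (hsum (k + m))
            refine ENNReal.rpow_le_rpow_of_exponent_ge ((hdiam _ _).trans (hε1 _)) ?_
            have : 1 / (((k + m : ℕ) : ℝ) + 1) ≤ 1 / ((m : ℝ) + 1) := by
              apply one_div_le_one_div_of_le (by positivity)
              push_cast
              linarith [(Nat.cast_nonneg k : (0 : ℝ) ≤ k)]
            linarith
        _ = _ := by
            simp_rw [pow_add]
            rw [ENNReal.tsum_mul_right, ENNReal.tsum_geometric, ENNReal.one_sub_inv_two, inv_inv]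
    have hlim2 : Tendsto (fun m : ℕ => 2 * (2⁻¹ : ENNReal) ^ m) atTop (𝓝 0) := by
      simpa using ENNReal.Tendsto.const_mul hlim0 (Or.inr (by simp : (2 : ENNReal) ≠ ⊤))
    exact (liminf_le_liminf hev).trans_eq hlim2.liminf_eq
  refine dimH_le fun d hd => ?_
  by_contra! hlt
  have : θ < d := by
    rwa [ENNReal.ofReal_lt_coe_iff hθ] at hlt
  simp [hmeas d this] at hd

/-! ### Small copies inside every interval -/

theorem dimH_affine_image (C : Set ℝ) (q : ℝ) {c : ℝ} (hc : c ≠ 0) :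
    dimH ((fun x => q + c * x) '' C) = dimH C := by
  have h : (fun x => q + c * x) '' C
      = IsometryEquiv.addLeft q '' (ContinuousLinearEquiv.unitsEquivAut ℝ (Units.mk0 c hc) '' C) := by
    rw [image_image]
    refine image_congr fun x _ => ?_
    simp [mul_comm]
  rw [h, IsometryEquiv.dimH_image, ContinuousLinearEquiv.dimH_image]

theorem exists_closed_seq {θ : ℝ} {C : Set ℝ} (hC : IsCompact C) (hne : C.Nonempty)
    (hdim : dimH C = ENNReal.ofReal θ) : ∃ F : ℕ → Set ℝ, (∀ j, IsClosed (F j)) ∧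
      (∀ j, (F j).Nonempty) ∧ (∀ j, dimH (F j) = ENNReal.ofReal θ) ∧
      ∀ a b : ℝ, a < b → ∃ j, F j ⊆ Ioo a b := by
  obtain ⟨u, hu⟩ := exists_surjective_nat (ℚ × ℕ)
  have hc : ∀ m : ℕ, (1 / ((m : ℝ) + 1)) ≠ 0 := fun m => by positivity
  refine ⟨fun j => (fun x => ((u j).1 : ℝ) + (1 / (((u j).2 : ℝ) + 1)) * x) '' C,
    fun j => (hC.image (by fun_prop)).isClosed, fun j => hne.image _,
    fun j => by rw [dimH_affine_image C _ (hc _), hdim], fun a b hab => ?_⟩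
  obtain ⟨q, hq⟩ := exists_rat_btwn hab
  obtain ⟨B, hB⟩ := hC.isBounded.exists_norm_le
  have hlim : Tendsto (fun m : ℕ => 1 / ((m : ℝ) + 1) * B) atTop (𝓝 0) := by
    simpa using tendsto_one_div_add_atTop_nhds_zero_nat.mul_const B
  obtain ⟨m, hm⟩ := (hlim.eventually_lt_const
    (lt_min (sub_pos.2 hq.1) (sub_pos.2 hq.2))).exists
  obtain ⟨j, hj⟩ := hu (q, m)
  refine ⟨j, ?_⟩
  rintro _ ⟨x, hx, rfl⟩
  rw [hj]
  have hx' := abs_le.1 (hB x hx)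
  have h0 : 0 ≤ 1 / ((m : ℝ) + 1) := by positivity
  have h1 := mul_le_mul_of_nonneg_left hx'.1 h0
  have h2 := mul_le_mul_of_nonneg_left hx'.2 h0
  have h3 := lt_min_iff.1 hm
  constructor <;> dsimp only <;> linarith [h3.1, h3.2]

/-! ### Spikes along a closed set -/

/-- The `n`-th approximation to `g x / dist (x, F)`: continuous, nondecreasing in `n`, and equal to
`(n + 1) * g x` on `F`. -/
noncomputable def spike (F : Set ℝ) (g : ℝ → ℝ) (n : ℕ) (x : ℝ) : ℝ :=
  g x / (Metric.infDist x F + 1 / ((n : ℝ) + 1))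

theorem spike_denom_pos (F : Set ℝ) (n : ℕ) (x : ℝ) :
    0 < Metric.infDist x F + 1 / ((n : ℝ) + 1) :=
  add_pos_of_nonneg_of_pos Metric.infDist_nonneg (by positivity)

theorem spike_nonneg {F : Set ℝ} {g : ℝ → ℝ} (hg : ∀ x, 0 ≤ g x) (n : ℕ) (x : ℝ) :
    0 ≤ spike F g n x := div_nonneg (hg x) (spike_denom_pos F n x).le

theorem continuous_spike (F : Set ℝ) {g : ℝ → ℝ} (hg : Continuous g) (n : ℕ) :
    Continuous (spike F g n) :=
  hg.div₀ ((Metric.continuous_infDist_pt F).add continuous_const)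
    fun x => (spike_denom_pos F n x).ne'

theorem spike_le_succ (F : Set ℝ) {g : ℝ → ℝ} (hg : ∀ x, 0 ≤ g x) (n : ℕ) (x : ℝ) :
    spike F g n x ≤ spike F g (n + 1) x := by
  refine div_le_div_of_nonneg_left (hg x) (spike_denom_pos F _ x) ?_
  gcongr
  simp

theorem tendsto_spike {F : Set ℝ} {g : ℝ → ℝ} {x : ℝ} (hx : x ∈ F) (hgx : g x = 1) :
    Tendsto (fun n => spike F g n x) atTop atTop := by
  simp only [spike, Metric.infDist_zero_of_mem hx, hgx, zero_add, one_div_one_div]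
  exact tendsto_atTop_add_const_right _ _ tendsto_natCast_atTop_atTop

theorem spike_le {F : Set ℝ} (hF : IsClosed F) (hne : F.Nonempty) {g : ℝ → ℝ}
    (hg : ∀ x, 0 ≤ g x) {x : ℝ} (hx : x ∉ F) (n : ℕ) :
    spike F g n x ≤ g x / Metric.infDist x F := by
  have := (hF.notMem_iff_infDist_pos hne).1 hx
  exact div_le_div_of_nonneg_left (hg x) this (le_add_of_nonneg_right (by positivity))

/-- The integral to the right of a point `q ∈ F` diverges because `dist (x, F) ≤ x - q` there and
`1 / (x - q)` is not integrable at `q`. The right endpoint `c` stays in the region `g ≥ 1 / 2`. -/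
theorem tendsto_integral_spike {F : Set ℝ} {g : ℝ → ℝ} (hgc : Continuous g) (hg : ∀ x, 0 ≤ g x)
    {q y : ℝ} (hq : q ∈ F) (hgq : g q = 1) (hy : q < y) :
    ∃ c, q < c ∧ c ≤ y ∧ Tendsto (fun n => ∫ t in q..c, spike F g n t) atTop atTop := by
  have hev : ∀ᶠ t in 𝓝 q, 1 / 2 < g t :=
    (hgc.tendsto q).eventually_const_lt (by rw [hgq]; norm_num)
  obtain ⟨δ, hδ, hball⟩ := Metric.eventually_nhds_iff.1 hev
  have hc0 : 0 < min (δ / 2) (y - q) := lt_min (by linarith) (by linarith)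
  set c := min (δ / 2) (y - q) with hc
  refine ⟨q + c, by linarith, by linarith [min_le_right (δ / 2) (y - q)], ?_⟩
  have hlow : ∀ n : ℕ, 1 / 2 * Real.log (c * ((n : ℝ) + 1)) ≤ ∫ t in q..q + c, spike F g n t := by
    intro n
    have he : 0 < 1 / ((n : ℝ) + 1) := by positivity
    have h1 : ∫ t in q..q + c, (1 / 2) * (t + (1 / ((n : ℝ) + 1) - q))⁻¹
        = 1 / 2 * Real.log ((c + 1 / ((n : ℝ) + 1)) / (1 / ((n : ℝ) + 1))) := by
      rw [intervalIntegral.integral_const_mul,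
        intervalIntegral.integral_comp_add_right (fun t => t⁻¹), integral_inv_of_pos]
      · congr 3; ring
        ring
      · linarith
      · linarith
    have h2 : c * ((n : ℝ) + 1) ≤ (c + 1 / ((n : ℝ) + 1)) / (1 / ((n : ℝ) + 1)) := by
      rw [le_div_iff₀ he]
      field_simp
      linarith
    calc _ ≤ _ := mul_le_mul_of_nonneg_left (Real.log_le_log (by positivity) h2) (by norm_num)
      _ = _ := h1.symm
      _ ≤ _ := by
        refine intervalIntegral.integral_mono_on (by linarith) ?_
          ((continuous_spike F hgc n).intervalIntegrable _ _) fun t ht => ?_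
        · refine ContinuousOn.intervalIntegrable ?_
          rw [uIcc_of_le (by linarith)]
          refine continuousOn_const.mul (ContinuousOn.inv₀ (by fun_prop) fun t ht => ?_)
          have := ht.1
          linarith
        · have h3 : Metric.infDist t F ≤ t - q := by
            refine (Metric.infDist_le_dist_of_mem hq).trans_eq ?_
            rw [Real.dist_eq, abs_of_nonneg (by linarith [ht.1])]
          have h4 : 1 / 2 ≤ g t := by
            refine (hball ?_).le
            rw [Real.dist_eq, abs_of_nonneg (by linarith [ht.1])]
            linarith [ht.2, min_le_left (δ / 2) (y - q)]
          rw [← div_eq_mul_inv]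
          refine div_le_div₀ (hg t) h4 (spike_denom_pos F n t) ?_
          linarith
  refine tendsto_atTop_mono hlow ?_
  refine Tendsto.const_mul_atTop (by norm_num) (Real.tendsto_log_atTop.comp ?_)
  exact Tendsto.const_mul_atTop hc0
    (tendsto_atTop_add_const_right _ _ tendsto_natCast_atTop_atTop)

/-! ### The max-family -/

theorem exists_cutoff {F N : Set ℝ} (hF : IsClosed F) (hN : IsOpen N) (hFN : F ⊆ N) :
    ∃ g : ℝ → ℝ, Continuous g ∧ (∀ x, 0 ≤ g x) ∧ (∀ x ∈ F, g x = 1) ∧ ∀ x ∉ N, g x = 0 := by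
  obtain ⟨g, h0, h1, h⟩ := exists_continuous_zero_one_of_isClosed hN.isClosed_compl hF
    (disjoint_compl_left_iff_subset.2 hFN)
  exact ⟨g, g.continuous, fun x => (h x).1, fun x hx => h1 hx, fun x hx => h0 hx⟩

/-- For every nondegenerate interval `I` and every `θ ∈ [0,1]` there is a max-family `(f_n)`
such that `dim_H (I_f ∩ U) = θ` for every nonempty open subinterval `U` of `I`. -/
theorem stmt_14 (I : Set ℝ) (hI : I.OrdConnected) (hInt : I.Nontrivial)
    (θ : ℝ) (hθ : θ ∈ Icc (0 : ℝ) 1) :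
    ∃ f : ℕ → ℝ → ℝ, IsMaxFamily I f ∧
      ∀ a b : ℝ, a < b → Ioo a b ⊆ I →
        dimH (limSet I f ∩ Ioo a b) = ENNReal.ofReal θ := by
  obtain ⟨C, hC, hCne, hCdim⟩ := exists_isCompact_dimH hθ
  obtain ⟨F, hFc, hFne, hFdim, hFsub⟩ := exists_closed_seq hC hCne hCdim
  obtain ⟨N, hNo, hFN, hNdim⟩ := exists_nhds_dimH_le hθ.1 F fun j => (hFdim j).le
  choose g hgc hg0 hg1 hgN using fun j => exists_cutoff (hFc j) (hNo j) (hFN j)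
  set f : ℕ → ℝ → ℝ := fun n x => ∑ j ∈ Finset.range n, spike (F j) (g j) n x with hf
  have hfc : ∀ n, Continuous (f n) := fun n =>
    continuous_finsetSum _ fun j _ => continuous_spike _ (hgc j) n
  have hf0 : ∀ n x, 0 ≤ f n x := fun n x =>
    Finset.sum_nonneg fun j _ => spike_nonneg (hg0 j) n x
  have hspike : ∀ j n x, j < n → spike (F j) (g j) n x ≤ f n x := fun j n x hj =>
    Finset.single_le_sum (f := fun j => spike (F j) (g j) n x)
      (fun j _ => spike_nonneg (hg0 j) n x) (Finset.mem_range.2 hj)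
  have hlimF : ∀ j, ∀ x ∈ F j, Tendsto (fun n => f n x) atTop atTop := fun j x hx =>
    tendsto_atTop_mono' _ ((eventually_gt_atTop j).mono fun n hn => hspike j n x hn)
      (tendsto_spike hx (hg1 j x hx))
  have hsub : ∀ x, Tendsto (fun n => f n x) atTop atTop →
      x ∈ (⋃ j, F j) ∪ {x | ∃ᶠ j in atTop, x ∈ N j} := by
    intro x hx
    by_contra hnot
    simp only [mem_union, mem_iUnion, mem_ofPred_eq, not_or, not_exists, not_frequently] at hnot
    obtain ⟨J, hJ⟩ := eventually_atTop.1 hnot.2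
    -- only the terms with `j < J` are nonzero at `x`, and each of them is bounded in `n`
    have hbd : ∀ n, f n x ≤ ∑ j ∈ Finset.range J, g j x / Metric.infDist x (F j) := by
      intro n
      have hnn : ∀ j, 0 ≤ g j x / Metric.infDist x (F j) := fun j =>
        div_nonneg (hg0 j x) Metric.infDist_nonneg
      refine (Finset.sum_le_sum fun j _ =>
        spike_le (hFc j) (hFne j) (hg0 j) (hnot.1 j) n).trans ?_
      rw [Finset.sum_subset
        (Finset.subset_union_right (s₁ := Finset.range n) (s₂ := Finset.range J))
        (f := fun j => g j x / Metric.infDist x (F j)) (fun j _ hj => by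
          rw [hgN j x (hJ j (by simpa using hj)), zero_div])]
      exact Finset.sum_le_sum_of_subset_of_nonneg Finset.subset_union_left fun j _ _ => hnn j
    obtain ⟨n, hn⟩ := (hx.eventually_gt_atTop _).exists
    exact absurd (hbd n) (not_le.2 hn)
  refine ⟨f, ⟨fun n => (hfc n).continuousOn, fun n x _ => ?_, fun x _ y _ hxy => ?_⟩,
    fun a b hab hIab => le_antisymm ?_ ?_⟩
  · refine (Finset.sum_le_sum fun j _ => spike_le_succ (F j) (hg0 j) n x).trans ?_
    exact Finset.sum_le_sum_of_subset_of_nonneg (Finset.range_mono (Nat.le_succ n))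
      fun j _ _ => spike_nonneg (hg0 j) _ x
  · obtain ⟨j, hj⟩ := hFsub x y hxy
    obtain ⟨q, hq⟩ := hFne j
    obtain ⟨c, hqc, hcy, hlim⟩ :=
      tendsto_integral_spike (hgc j) (hg0 j) hq (hg1 j q hq) (hj hq).2
    refine tendsto_atTop_mono' _ ((eventually_gt_atTop j).mono fun n hn => ?_) hlim
    refine (intervalIntegral.integral_mono_on hqc.le
      ((continuous_spike _ (hgc j) n).intervalIntegrable _ _) ((hfc n).intervalIntegrable _ _)
      fun t _ => hspike j n t hn).trans ?_
    exact intervalIntegral.integral_mono_interval (hj hq).1.le hqc.le hcy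
      (Eventually.of_forall fun t => hf0 n t) ((hfc n).intervalIntegrable _ _)
  · refine (dimH_mono fun x hx => hsub x hx.1.2).trans ?_
    rw [dimH_union, dimH_iUnion]
    exact max_le (iSup_le fun j => (hFdim j).le) hNdim
  · obtain ⟨j, hj⟩ := hFsub a b hab
    rw [← hFdim j]
    exact dimH_mono fun x hx => ⟨⟨hIab (hj hx), hlimF j x hx⟩, hj hx⟩
end
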